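/- Let (Q, Δ, B) be a nondeterministic Büchi automaton over an alphabet A, u an ω-word over A, and c the canonical rank function of the run DAG of the automaton on u. For every state q ∈ Q, the word u is accepted from q if and only if c(⟨0, q⟩) = ∞. -/

import Mathlib

/-- The ω-word `u` is accepted by the nondeterministic Büchi automaton with transition
relation `Δ` and Büchi set `B` from state `q`: there is a run starting in `q` that
visits `B` infinitely often. -/
def NBAAccepts {Q A : Type*} (Δ : Set (Q × A × Q)) (B : Set Q) (u : ℕ → A) (q : Q) :
    Prop :=
  ∃ r : ℕ → Q, r 0 = q ∧ (∀ i, (r i, u i, r (i + 1)) ∈ Δ) ∧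
    ∀ m, ∃ i, m ≤ i ∧ r i ∈ B

/-- A leveled DAG over `Q`: vertex set a subset of `ℕ × Q`, every edge goes from a
vertex on some level `i` to a vertex on level `i + 1`. -/
structure LDAG (Q : Type*) where
  V : Set (ℕ × Q)
  E : ℕ × Q → ℕ × Q → Prop
  edge_mem : ∀ ⦃v w⦄, E v w → v ∈ V ∧ w ∈ V
  edge_level : ∀ ⦃v w⦄, E v w → w.1 = v.1 + 1

namespace LDAG

variable {Q : Type*}

/-- `w` is a descendant of `v` (including `v` itself). -/
def Desc (D : LDAG Q) : ℕ × Q → ℕ × Q → Prop := Relation.ReflTransGen D.E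

/-- A vertex is finitary if it has only finitely many descendants. -/
def Finitary (D : LDAG Q) (v : ℕ × Q) : Prop := {w | D.Desc v w}.Finite

/-- A vertex is `B`-free if no descendant of it (including itself) is `B`-tagged. -/
def BFree (D : LDAG Q) (B : Set Q) (v : ℕ × Q) : Prop :=
  ∀ w, D.Desc v w → w.2 ∉ B

/-- A vertex is `B`-recurring if some infinite path starting in it contains infinitely
many `B`-tagged vertices. -/
def BRecurring (D : LDAG Q) (B : Set Q) (v : ℕ × Q) : Prop :=
  ∃ p : ℕ → ℕ × Q, p 0 = v ∧ (∀ n, D.E (p n) (p (n + 1))) ∧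
    ∀ m, ∃ n, m ≤ n ∧ (p n).2 ∈ B

/-- The subgraph of `D` induced by the set `S` of vertices. -/
def induced (D : LDAG Q) (S : Set (ℕ × Q)) : LDAG Q where
  V := D.V ∩ S
  E v w := D.E v w ∧ v ∈ S ∧ w ∈ S
  edge_mem := fun _ _ h => ⟨⟨(D.edge_mem h.1).1, h.2.1⟩, ⟨(D.edge_mem h.1).2, h.2.2⟩⟩
  edge_level := fun _ _ h => D.edge_level h.1

/-- One peeling step: first remove all finitary vertices, then remove all vertices that
are `B`-free in the resulting induced subgraph. -/
def peel (B : Set Q) (D : LDAG Q) : LDAG Q :=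
  let D₁ := D.induced {v | ¬ D.Finitary v}
  D₁.induced {v | ¬ D₁.BFree B v}

end LDAG

/-- The run DAG of the Büchi automaton with transition relation `Δ` on the ω-word `u`:
vertex set `ℕ × Q`, edges from `⟨i, q⟩` to `⟨i+1, q'⟩` whenever `(q, u i, q') ∈ Δ`. -/
def runDAG {Q A : Type*} (Δ : Set (Q × A × Q)) (u : ℕ → A) : LDAG Q where
  V := Set.univ
  E v w := w.1 = v.1 + 1 ∧ (v.2, u v.1, w.2) ∈ Δ
  edge_mem := fun _ _ _ => ⟨trivial, trivial⟩
  edge_level := fun _ _ h => h.1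

namespace LDAG

/-- The set of vertices assigned a canonical rank `< k` (successive peeling):
vertices of even rank `2i` are those finitary in the subgraph induced by the vertices of
rank `≥ 2i`; vertices of odd rank `2i+1` are those `B`-free in the subgraph induced by
the vertices of rank `≥ 2i+1`. -/
def rankBelow {Q : Type*} (B : Set Q) (D : LDAG Q) : ℕ → Set (ℕ × Q)
  | 0 => ∅
  | k + 1 =>
    rankBelow B D k ∪
      (if k % 2 = 0 then
        {v | v ∈ (D.induced (rankBelow B D k)ᶜ).V ∧
          (D.induced (rankBelow B D k)ᶜ).Finitary v}
      else
        {v | v ∈ (D.induced (rankBelow B D k)ᶜ).V ∧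
          (D.induced (rankBelow B D k)ᶜ).BFree B v})

/-- The canonical rank of a vertex: the least `n` such that the vertex is assigned rank
`n` in the successive peeling process, and `∞` if it is never assigned a rank. -/
noncomputable def crank {Q : Type*} (B : Set Q) (D : LDAG Q) (v : ℕ × Q) : ℕ∞ :=
  sInf {k : ℕ∞ | ∃ n : ℕ, k = n ∧ v ∈ rankBelow B D (n + 1)}

end LDAG

/-!
Two peeling rounds of the rank construction, an even one and the following odd one, amount to one
application of `LDAG.peel`, so a vertex has rank `∞` iff it survives every iterate of `peel`.

A path visiting `B` infinitely often survives `peel`: its vertices have infinitely many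
descendants, and keep infinitely many `B`-tagged ones once the finitary vertices are gone.

Conversely, by König's lemma every vertex of the subgraph left after removing the finitary vertices
has a successor in it. If no vertex of that subgraph is `B`-free, walking along shortest paths to
`B` yields a path that visits `B` infinitely often. If some vertex `v` is `B`-free, then so are its
descendants, and these meet every level beyond that of `v`; hence `peel` strictly shrinks all those
levels, and this can only happen as often as the number of vertices per level allows.
-/

theorem exists_ge_iterate_of_forall_or_measure_lt {α : Type*} {f : α → α} {P : α → Prop}
    (μ : α → ℕ) (h : ∀ x, P x ∨ μ (f x) < μ x) (x : α) (m : ℕ) : ∃ n, m ≤ n ∧ P (f^[n] x) := by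
  have exists_iterate (y : α) : ∃ n, P (f^[n] y) := by
    induction y using (measure μ).wf.induction with
    | _ y ih =>
      obtain hy | hy := h y
      · exact ⟨0, hy⟩
      · obtain ⟨n, hn⟩ := ih (f y) hy
        exact ⟨n + 1, hn⟩
  obtain ⟨n, hn⟩ := exists_iterate (f^[m] x)
  exact ⟨n + m, Nat.le_add_left m n, by rwa [Function.iterate_add_apply]⟩

namespace LDAG

variable {Q : Type*} {D : LDAG Q} {B : Set Q} {S T : Set (ℕ × Q)} {v w : ℕ × Q}

section Path

/-- An infinite path of `D`, given as the sequence of its vertices. -/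
def IsPath (D : LDAG Q) (p : ℕ → ℕ × Q) : Prop := ∀ n, D.E (p n) (p (n + 1))

variable {p : ℕ → ℕ × Q}

theorem IsPath.level_eq (hp : D.IsPath p) (n : ℕ) : (p n).1 = (p 0).1 + n := by
  induction n with
  | zero => rfl
  | succ n ih => rw [D.edge_level (hp n), ih, Nat.add_assoc]

theorem IsPath.injective (hp : D.IsPath p) : Function.Injective p := by
  intro m n hmn
  have hlevel := congrArg Prod.fst hmn
  rw [hp.level_eq m, hp.level_eq n] at hlevel
  exact Nat.add_left_cancel hlevel

theorem IsPath.desc (hp : D.IsPath p) {m n : ℕ} (hmn : m ≤ n) : D.Desc (p m) (p n) :=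
  Nat.rel_of_forall_rel_succ_of_le (Relation.ReflTransGen D.E)
    (fun i => Relation.ReflTransGen.single (hp i)) hmn

theorem IsPath.not_finitary (hp : D.IsPath p) (n : ℕ) : ¬ D.Finitary (p n) :=
  Set.infinite_of_injective_forall_mem (hp.injective.comp (add_right_injective n))
    fun i => hp.desc (Nat.le_add_right n i)

theorem IsPath.not_bFree (hp : D.IsPath p) (hB : ∀ m, ∃ n, m ≤ n ∧ (p n).2 ∈ B) (n : ℕ) :
    ¬ D.BFree B (p n) := by
  intro hfree
  obtain ⟨m, hnm, hm⟩ := hB n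
  exact hfree (p m) (hp.desc hnm) hm

theorem IsPath.induced (hp : D.IsPath p) (hS : ∀ n, p n ∈ S) : (D.induced S).IsPath p :=
  fun n => ⟨hp n, hS n, hS (n + 1)⟩

end Path

section Induced

theorem induced_univ : D.induced Set.univ = D := by
  cases D
  simp only [induced, Set.inter_univ, Set.mem_univ, and_true]

theorem induced_congr (h : ∀ v ∈ D.V, v ∈ S ↔ v ∈ T) : D.induced S = D.induced T := by
  simp only [induced, mk.injEq]
  refine ⟨Set.ext fun v => and_congr_right (h v), ?_⟩
  funext v w
  refine propext (and_congr_right fun hvw => ?_)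
  rw [h v (D.edge_mem hvw).1, h w (D.edge_mem hvw).2]

theorem induced_induced : (D.induced S).induced T = D.induced (S ∩ T) := by
  simp only [induced, mk.injEq, Set.inter_assoc, Set.mem_inter_iff, true_and]
  funext v w
  exact propext (by tauto)

theorem BRecurring.of_induced : (D.induced S).BRecurring B v → D.BRecurring B v :=
  fun ⟨p, hp₀, hp, hB⟩ => ⟨p, hp₀, fun n => (hp n).1, hB⟩

theorem BRecurring.mem_V : D.BRecurring B v → v ∈ D.V := by
  rintro ⟨p, rfl, hp, -⟩
  exact (D.edge_mem (hp 0)).1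

end Induced

section Serial

/-- A leveled DAG without dead ends: every vertex has a successor. -/
def Serial (D : LDAG Q) : Prop := ∀ v ∈ D.V, ∃ w, D.E v w

theorem Serial.exists_desc_level_eq (hD : D.Serial) (hv : v ∈ D.V) {i : ℕ} (hi : v.1 ≤ i) :
    ∃ w ∈ D.V, D.Desc v w ∧ w.1 = i := by
  induction i, hi using Nat.le_induction with
  | base => exact ⟨v, hv, Relation.ReflTransGen.refl, rfl⟩
  | succ i _ ih =>
    obtain ⟨w, hw, hvw, rfl⟩ := ih
    obtain ⟨x, hwx⟩ := hD w hw
    exact ⟨x, (D.edge_mem hwx).2, hvw.tail hwx, D.edge_level hwx⟩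

/-- The length of a shortest path from `v` to a `B`-tagged vertex, read off as a difference of
levels. Its value on a `B`-free vertex is the junk value `0`. -/
noncomputable def distTo (D : LDAG Q) (B : Set Q) (v : ℕ × Q) : ℕ :=
  sInf {k | ∃ w, D.Desc v w ∧ w.2 ∈ B ∧ w.1 = v.1 + k}

theorem Desc.level_le (h : D.Desc v w) : v.1 ≤ w.1 := by
  induction h with
  | refl => exact le_rfl
  | tail _ hxw ih => exact ih.trans (D.edge_level hxw ▸ Nat.le_succ _)

theorem exists_desc_mem_level_eq_add_distTo (h : ¬ D.BFree B v) :
    ∃ w, D.Desc v w ∧ w.2 ∈ B ∧ w.1 = v.1 + D.distTo B v := by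
  simp only [BFree, not_forall, not_not] at h
  obtain ⟨w, hvw, hw⟩ := h
  exact Nat.sInf_mem (s := {k | ∃ w, D.Desc v w ∧ w.2 ∈ B ∧ w.1 = v.1 + k})
    ⟨w.1 - v.1, w, hvw, hw, (Nat.add_sub_cancel' hvw.level_le).symm⟩

theorem exists_edge_distTo_lt (h : ¬ D.BFree B v) (hv : v.2 ∉ B) :
    ∃ w, D.E v w ∧ D.distTo B w < D.distTo B v := by
  obtain ⟨x, hvx, hx, hlevel⟩ := exists_desc_mem_level_eq_add_distTo h
  obtain rfl | ⟨w, hvw, hwx⟩ := hvx.cases_head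
  · exact absurd hx hv
  have hw_level := D.edge_level hvw
  have hwx_level := Desc.level_le hwx
  have hdist : D.distTo B w ≤ x.1 - w.1 := Nat.sInf_le ⟨x, hwx, hx, by omega⟩
  exact ⟨w, hvw, by omega⟩

theorem Serial.bRecurring (hD : D.Serial) (hB : ∀ v ∈ D.V, ¬ D.BFree B v) (hv : v ∈ D.V) :
    D.BRecurring B v := by
  have exists_next (x : D.V) :
      ∃ y : D.V, D.E x y ∧ (x.1.2 ∈ B ∨ D.distTo B y < D.distTo B x) := by
    by_cases hx : x.1.2 ∈ B
    · obtain ⟨y, hxy⟩ := hD x x.2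
      exact ⟨⟨y, (D.edge_mem hxy).2⟩, hxy, Or.inl hx⟩
    · obtain ⟨y, hxy, hdist⟩ := exists_edge_distTo_lt (hB x x.2) hx
      exact ⟨⟨y, (D.edge_mem hxy).2⟩, hxy, Or.inr hdist⟩
  choose next hedge hnext using exists_next
  refine ⟨fun n => next^[n] ⟨v, hv⟩, rfl, fun n => ?_, ?_⟩
  · simp only [Function.iterate_succ_apply']
    exact hedge _
  · exact exists_ge_iterate_of_forall_or_measure_lt (fun x : D.V => D.distTo B x) hnext ⟨v, hv⟩

end Serial

section Prune

/-- The subgraph induced by the vertices with infinitely many descendants, i.e. the first half of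
the step `peel`. -/
def prune (D : LDAG Q) : LDAG Q := D.induced {v | ¬ D.Finitary v}

theorem peel_eq_induced_prune : peel B D = D.prune.induced {v | ¬ D.prune.BFree B v} := rfl

theorem exists_edge_not_finitary (hfin : {w | D.E v w}.Finite) (hv : ¬ D.Finitary v) :
    ∃ w, D.E v w ∧ ¬ D.Finitary w := by
  by_contra! hsucc
  have hfinite : ({v} ∪ ⋃ w ∈ {w | D.E v w}, {x | D.Desc w x}).Finite :=
    (Set.finite_singleton v).union (hfin.biUnion hsucc)
  refine hv (hfinite.subset fun x hvx => ?_)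
  obtain rfl | ⟨w, hvw, hwx⟩ := Relation.ReflTransGen.cases_head hvx
  · exact Or.inl rfl
  · exact Or.inr (Set.mem_biUnion hvw hwx)

theorem serial_prune (hfin : ∀ v, {w | D.E v w}.Finite) : D.prune.Serial := by
  rintro v ⟨-, hv⟩
  obtain ⟨w, hvw, hw⟩ := exists_edge_not_finitary (hfin v) hv
  exact ⟨w, hvw, hv, hw⟩

theorem BRecurring.peel (h : D.BRecurring B v) : (peel B D).BRecurring B v := by
  obtain ⟨p, hp₀, hp, hB⟩ := h
  have hprune : D.prune.IsPath p := IsPath.induced hp (IsPath.not_finitary hp)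
  exact ⟨p, hp₀, hprune.induced (hprune.not_bFree hB), hB⟩

theorem BRecurring.of_peel (h : (LDAG.peel B D).BRecurring B v) : D.BRecurring B v :=
  h.of_induced.of_induced

theorem BRecurring.iterate_peel (h : D.BRecurring B v) (k : ℕ) :
    ((LDAG.peel B)^[k] D).BRecurring B v := by
  induction k with
  | zero => exact h
  | succ k ih =>
    rw [Function.iterate_succ_apply']
    exact ih.peel

end Prune

section Width

open Filter

/-- The states occurring on the `i`-th level of `D`. -/
def level (D : LDAG Q) (i : ℕ) : Set Q := {q | (i, q) ∈ D.V}

/-- All levels of `D` are finite, and all but finitely many have at most `n` vertices. -/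
def EventualWidthLE (D : LDAG Q) (n : ℕ) : Prop :=
  (∀ i, (D.level i).Finite) ∧ ∀ᶠ i in atTop, (D.level i).ncard ≤ n

theorem eventualWidthLE_card [Finite Q] (D : LDAG Q) : D.EventualWidthLE (Nat.card Q) :=
  ⟨fun i => (D.level i).toFinite, Eventually.of_forall fun i => Set.ncard_le_card (D.level i)⟩

theorem finite_setOf_edge (hfin : ∀ i, (D.level i).Finite) (v : ℕ × Q) : {w | D.E v w}.Finite := by
  refine ((hfin (v.1 + 1)).image (Prod.mk (v.1 + 1))).subset fun w hvw => ?_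
  have hw : (v.1 + 1, w.2) = w := Prod.ext (D.edge_level hvw).symm rfl
  refine ⟨w.2, ?_, hw⟩
  rw [level, Set.mem_ofPred_eq, hw]
  exact (D.edge_mem hvw).2

theorem level_peel_subset_level_prune (i : ℕ) : (peel B D).level i ⊆ D.prune.level i :=
  fun _ hq => hq.1

theorem level_prune_subset_level (i : ℕ) : D.prune.level i ⊆ D.level i :=
  fun _ hq => hq.1

theorem BFree.desc (hv : D.BFree B v) (hvw : D.Desc v w) : D.BFree B w :=
  fun x hwx => hv x (hvw.trans hwx)

theorem level_peel_ssubset_level (hD : D.prune.Serial) (hv : v ∈ D.prune.V)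
    (hfree : D.prune.BFree B v) {i : ℕ} (hi : v.1 ≤ i) : (peel B D).level i ⊂ D.level i := by
  obtain ⟨w, hw, hvw, rfl⟩ := hD.exists_desc_level_eq hv hi
  have hw_peel : w.2 ∉ (peel B D).level w.1 := fun hmem => hmem.2 (hfree.desc hvw)
  exact (Set.ssubset_iff_of_subset (level_peel_subset_level_prune w.1)).2 ⟨w.2, hw, hw_peel⟩
    |>.trans_subset (level_prune_subset_level w.1)

theorem EventualWidthLE.exists_lt_peel {n : ℕ} (hD : D.EventualWidthLE n)
    (hv : v ∈ D.prune.V) (hfree : D.prune.BFree B v) :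
    ∃ m < n, (peel B D).EventualWidthLE m := by
  have hserial : D.prune.Serial := serial_prune (finite_setOf_edge hD.1)
  have hlt : ∀ᶠ i in atTop, ((peel B D).level i).ncard < n := by
    filter_upwards [hD.2, eventually_ge_atTop v.1] with i hcard hi
    exact (Set.ncard_lt_ncard (level_peel_ssubset_level hserial hv hfree hi) (hD.1 i)).trans_le
      hcard
  have hpos : 0 < n := hlt.exists.elim fun _ hi => Nat.zero_lt_of_lt hi
  refine ⟨n - 1, Nat.sub_one_lt_of_lt hpos, fun i => ?_, hlt.mono fun i => Nat.le_sub_one_of_lt⟩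
  exact (hD.1 i).subset ((level_peel_subset_level_prune i).trans (level_prune_subset_level i))

theorem EventualWidthLE.bRecurring_of_forall_mem_iterate_peel {n : ℕ} (hD : D.EventualWidthLE n)
    (hv : ∀ k, v ∈ ((peel B)^[k] D).V) : D.BRecurring B v := by
  induction n using Nat.strong_induction_on generalizing D with
  | _ n ih =>
    by_cases hfree : ∃ x ∈ D.prune.V, D.prune.BFree B x
    · obtain ⟨x, hx, hx_free⟩ := hfree
      obtain ⟨m, hmn, hm⟩ := hD.exists_lt_peel hx hx_free
      exact (ih m hmn hm fun k => hv (k + 1)).of_peel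
    · push Not at hfree
      have hv_prune : v ∈ D.prune.V := (hv 1).1
      have hserial : D.prune.Serial := serial_prune (finite_setOf_edge hD.1)
      exact (hserial.bRecurring hfree hv_prune).of_induced

end Width

section Rank

variable {k : ℕ}

theorem rankBelow_mono (B : Set Q) (D : LDAG Q) : Monotone (rankBelow B D) :=
  monotone_nat_of_le_succ fun _ => Set.subset_union_left

theorem induced_compl_rankBelow_succ_of_even (hk : Even k) :
    D.induced (rankBelow B D (k + 1))ᶜ = (D.induced (rankBelow B D k)ᶜ).prune := by
  rw [prune, induced_induced]
  refine induced_congr fun v hv => ?_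
  rw [rankBelow, if_pos (Nat.even_iff.1 hk)]
  simp only [induced, Set.mem_compl_iff, Set.mem_union, Set.mem_inter_iff, Set.mem_ofPred_eq]
  tauto

theorem induced_compl_rankBelow_succ_of_odd (hk : Odd k) :
    D.induced (rankBelow B D (k + 1))ᶜ = (D.induced (rankBelow B D k)ᶜ).induced
      {v | ¬ (D.induced (rankBelow B D k)ᶜ).BFree B v} := by
  rw [induced_induced]
  refine induced_congr fun v hv => ?_
  rw [rankBelow, if_neg (Nat.not_even_iff_odd.2 hk ∘ Nat.even_iff.2)]
  simp only [induced, Set.mem_compl_iff, Set.mem_union, Set.mem_inter_iff, Set.mem_ofPred_eq]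
  tauto

theorem induced_compl_rankBelow_two_mul (B : Set Q) (D : LDAG Q) (k : ℕ) :
    D.induced (rankBelow B D (2 * k))ᶜ = (peel B)^[k] D := by
  induction k with
  | zero => rw [Nat.mul_zero, rankBelow, Set.compl_empty, induced_univ, Function.iterate_zero_apply]
  | succ k ih =>
    have hprune := induced_compl_rankBelow_succ_of_even (B := B) (D := D) (even_two_mul k)
    rw [Nat.mul_succ, induced_compl_rankBelow_succ_of_odd (odd_two_mul_add_one k), hprune, ih,
      Function.iterate_succ_apply', peel_eq_induced_prune]

theorem crank_eq_top_iff : crank B D v = ⊤ ↔ ∀ n, v ∉ rankBelow B D n := by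
  rw [crank, sInf_eq_top]
  constructor
  · intro h n hn
    exact ENat.natCast_ne_top n (h n ⟨n, rfl, rankBelow_mono B D n.le_succ hn⟩)
  · rintro h _ ⟨n, -, hn⟩
    exact absurd hn (h (n + 1))

theorem crank_eq_top_iff_forall_mem_iterate_peel (hv : v ∈ D.V) :
    crank B D v = ⊤ ↔ ∀ k, v ∈ ((peel B)^[k] D).V := by
  simp only [crank_eq_top_iff, ← induced_compl_rankBelow_two_mul]
  constructor
  · exact fun h k => ⟨hv, h (2 * k)⟩
  · exact fun h n hn => (h n).2 (rankBelow_mono B D (Nat.le_mul_of_pos_left n two_pos) hn)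

theorem EventualWidthLE.bRecurring_iff_crank_eq_top {n : ℕ} (hD : D.EventualWidthLE n)
    (hv : v ∈ D.V) : D.BRecurring B v ↔ crank B D v = ⊤ := by
  rw [crank_eq_top_iff_forall_mem_iterate_peel hv]
  exact ⟨fun h k => (h.iterate_peel k).mem_V, hD.bRecurring_of_forall_mem_iterate_peel⟩

end Rank

end LDAG

theorem nbaAccepts_iff_bRecurring_runDAG {Q A : Type*} {Δ : Set (Q × A × Q)} {B : Set Q}
    {u : ℕ → A} {q : Q} : NBAAccepts Δ B u q ↔ (runDAG Δ u).BRecurring B (0, q) := by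
  constructor
  · rintro ⟨r, rfl, hr, hB⟩
    exact ⟨fun n => (n, r n), rfl, fun n => ⟨rfl, hr n⟩, hB⟩
  · rintro ⟨p, hp₀, hp, hB⟩
    have hlevel (n : ℕ) : (p n).1 = n := by
      rw [LDAG.IsPath.level_eq hp n, hp₀, Nat.zero_add]
    refine ⟨fun n => (p n).2, congrArg Prod.snd hp₀, fun n => ?_, hB⟩
    have hedge := (hp n).2
    rwa [hlevel n] at hedge

/-- for a Büchi automaton `(Q, Δ, B)` and the canonical rank function
`c` of the run DAG on an ω-word `u`, the word `u` is accepted from the state `q` iff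
`c ⟨0, q⟩ = ∞`. -/
theorem accepted_iff_crank_top {Q A : Type*} [Fintype Q] (Δ : Set (Q × A × Q))
    (B : Set Q) (u : ℕ → A) (q : Q) :
    NBAAccepts Δ B u q ↔ LDAG.crank B (runDAG Δ u) (0, q) = ⊤ := by
  rw [nbaAccepts_iff_bRecurring_runDAG]
  exact (LDAG.eventualWidthLE_card (runDAG Δ u)).bRecurring_iff_crank_eq_top (Set.mem_univ _)
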